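/- Let f ∈ L¹[0,1] and γ > 0. For every u ∈ L¹[0,1] there exists a sequence (u^k) in L¹[0,1] with ‖u^k − u‖_{L¹} → 0 as k → ∞ such that P_γ(u) ≥ limsup_{k→∞} Q_γ^k(u^k). -/

import Mathlib

open MeasureTheory Filter Set
open scoped ENNReal Classical

noncomputable section

/-- The Lebesgue measure restricted to `[0,1]`. -/
def mu01 : Measure ℝ := volume.restrict (Set.Icc (0:ℝ) 1)

/-- The step function determined by partition points `x` and values `a`. -/
def stepF {m : ℕ} (x : Fin (m + 1) → ℝ) (a : Fin m → ℝ) : ℝ → ℝ := fun t =>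
  ∑ l : Fin m, Set.indicator (Set.Ioo (x l.castSucc) (x l.succ)) (fun _ => a l) t

/-- `u` is a.e. on `[0,1]` represented by the step function with partition `x` and values `a`. -/
def IsPCRep (u : ℝ → ℝ) {m : ℕ} (x : Fin (m + 1) → ℝ) (a : Fin m → ℝ) : Prop :=
  StrictMono x ∧ x 0 = 0 ∧ x (Fin.last m) = 1 ∧ ∀ᵐ t ∂mu01, u t = stepF x a t

/-- `u` is piecewise constant on `[0,1]` (up to a.e. equality). -/
def IsPC (u : ℝ → ℝ) : Prop :=
  ∃ (m : ℕ) (x : Fin (m + 1) → ℝ) (a : Fin m → ℝ), IsPCRep u x a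

/-- The number of jumps `J(u)`: the minimal number of interior partition points over all
piecewise constant representations of `u`. -/
def jumps (u : ℝ → ℝ) : ℕ :=
  sInf {jj : ℕ | ∃ (x : Fin (jj + 2) → ℝ) (a : Fin (jj + 1) → ℝ), IsPCRep u x a}

/-- `u` is piecewise constant with all jump locations inside `S`. -/
def IsPCIn (u : ℝ → ℝ) (S : Set ℝ) : Prop :=
  ∃ (m : ℕ) (x : Fin (m + 1) → ℝ) (a : Fin m → ℝ), IsPCRep u x a ∧
    ∀ i : Fin (m + 1), i ≠ 0 → i ≠ Fin.last m → x i ∈ S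

/-- The `L¹[0,1]` distance of two functions. -/
def L1dist (u v : ℝ → ℝ) : ℝ := ∫ t, |u t - v t| ∂mu01

/-- The continuous `L¹`-Potts functional `P_γ` with data `f`. -/
def Potts (γ : ℝ) (f u : ℝ → ℝ) : ℝ≥0∞ :=
  if IsPC u then ENNReal.ofReal (γ * (jumps u : ℝ) + L1dist u f) else ⊤

/-- The (semi-)discrete `L¹`-Potts functional with data `f`, restricted to piecewise
constant functions whose jumps lie in `S`. -/
def PottsIn (γ : ℝ) (f : ℝ → ℝ) (S : Set ℝ) (u : ℝ → ℝ) : ℝ≥0∞ :=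
  if IsPCIn u S then ENNReal.ofReal (γ * (jumps u : ℝ) + L1dist u f) else ⊤

/-!
Take a representation of `u` with the minimal number of jumps and move its interior nodes to nearby
grid points, keeping all the values. Once the nodes are close to their limits they are still
strictly ordered, so the moved function is an admissible competitor with at most `J(u)` jumps. Away
from the finitely many original nodes it is eventually equal to `u`, so by dominated convergence its
`L¹`-distance to any integrable function converges to that of `u`.
-/

section Approximation

variable {E : Type*} [PseudoEMetricSpace E]

theorem tendsto_infEDist_of_mem_closure_iUnion {ι : Type*} [Preorder ι] {X : ι → Set E}
    (hX : Monotone X) {p : E} (hp : p ∈ closure (⋃ k, X k)) :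
    Tendsto (fun k => Metric.infEDist p (X k)) atTop (nhds 0) := by
  have hlim := tendsto_atTop_iInf fun i j hij => Metric.infEDist_anti (x := p) (hX hij)
  rwa [← Metric.infEDist_iUnion, Metric.mem_closure_iff_infEDist_zero.1 hp] at hlim

theorem exists_tendsto_eventually_mem_of_tendsto_infEDist {X : ℕ → Set E} {p : E}
    (hp : Tendsto (fun k => Metric.infEDist p (X k)) atTop (nhds 0)) :
    ∃ z : ℕ → E, Tendsto z atTop (nhds p) ∧ ∀ᶠ k in atTop, z k ∈ X k := by
  -- The infimum need not be attained; the slack `1 / k` disappears in the limit.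
  have almost_nearest (k : ℕ) : ∃ z, Metric.infEDist p (X k) < ⊤ →
      z ∈ X k ∧ edist p z < Metric.infEDist p (X k) + (k : ℝ≥0∞)⁻¹ := by
    by_cases hk : Metric.infEDist p (X k) < ⊤
    · obtain ⟨z, hz⟩ := Metric.infEDist_lt_iff.1
        (ENNReal.lt_add_right hk.ne (ENNReal.inv_ne_zero.2 (ENNReal.natCast_ne_top k)))
      exact ⟨z, fun _ => hz⟩
    · exact ⟨p, fun h => absurd h hk⟩
  choose z hz using almost_nearest
  have finite_dist : ∀ᶠ k in atTop, Metric.infEDist p (X k) < ⊤ :=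
    hp.eventually_lt_const ENNReal.zero_lt_top
  have slack : Tendsto (fun k : ℕ => Metric.infEDist p (X k) + (k : ℝ≥0∞)⁻¹) atTop (nhds 0) := by
    simpa only [add_zero] using hp.add ENNReal.tendsto_inv_nat_nhds_zero
  refine ⟨z, tendsto_iff_edist_tendsto_0.2 ?_, finite_dist.mono fun k hk => (hz k hk).1⟩
  refine tendsto_of_tendsto_of_tendsto_of_le_of_le' tendsto_const_nhds slack
    (Eventually.of_forall fun _ => zero_le) (finite_dist.mono fun k hk => ?_)
  rw [edist_comm]
  exact (hz k hk).2.le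

end Approximation

section Order

variable {ι α : Type*} {l : Filter ι} [LinearOrder α] [TopologicalSpace α]

theorem eventually_strictMono_of_tendsto [OrderClosedTopology α] {κ : Type*} [Finite κ]
    [Preorder κ] {y : ι → κ → α} {x : κ → α} (hy : Tendsto y l (nhds x)) (hx : StrictMono x) :
    ∀ᶠ k in l, StrictMono (y k) := by
  have hlt (i j : κ) : ∀ᶠ k in l, i < j → y k i < y k j := by
    by_cases hij : i < j
    · filter_upwards [(hy.apply_nhds i).eventually_lt (hy.apply_nhds j) (hx hij)] with k hk _
      exact hk
    · exact Eventually.of_forall fun _ h => absurd h hij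
  filter_upwards [eventually_all.2 fun i => eventually_all.2 (hlt i)] with k hk i j
  exact hk i j

theorem eventually_mem_Ioo_iff_of_tendsto [OrderTopology α] {a b : ι → α} {a₀ b₀ t : α}
    (ha : Tendsto a l (nhds a₀)) (hb : Tendsto b l (nhds b₀)) (hta : a₀ ≠ t) (htb : b₀ ≠ t) :
    ∀ᶠ k in l, (t ∈ Ioo (a k) (b k) ↔ t ∈ Ioo a₀ b₀) := by
  have ha_iff : ∀ᶠ k in l, (a k < t ↔ a₀ < t) := by
    rcases hta.lt_or_gt with h | h
    · filter_upwards [ha.eventually_lt_const h] with k hk using iff_of_true hk h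
    · filter_upwards [ha.eventually_const_lt h] with k hk using iff_of_false hk.not_gt h.not_gt
  have hb_iff : ∀ᶠ k in l, (t < b k ↔ t < b₀) := by
    rcases htb.lt_or_gt with h | h
    · filter_upwards [hb.eventually_lt_const h] with k hk using iff_of_false hk.not_gt h.not_gt
    · filter_upwards [hb.eventually_const_lt h] with k hk using iff_of_true hk h
  filter_upwards [ha_iff, hb_iff] with k hak hbk using and_congr hak hbk

end Order

section StepFunction

variable {m : ℕ}

theorem measurable_stepF (x : Fin (m + 1) → ℝ) (a : Fin m → ℝ) : Measurable (stepF x a) :=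
  Finset.measurable_fun_sum _ fun _ _ => measurable_const.indicator measurableSet_Ioo

theorem abs_stepF_le (x : Fin (m + 1) → ℝ) (a : Fin m → ℝ) (t : ℝ) :
    |stepF x a t| ≤ ∑ l, |a l| :=
  (Finset.abs_sum_le_sum_abs _ _).trans <|
    Finset.sum_le_sum fun l _ => norm_indicator_le_norm_self (fun _ => a l) t

instance isFiniteMeasure_mu01 : IsFiniteMeasure mu01 :=
  inferInstanceAs (IsFiniteMeasure (volume.restrict (Icc (0 : ℝ) 1)))

theorem integrable_stepF (x : Fin (m + 1) → ℝ) (a : Fin m → ℝ) : Integrable (stepF x a) mu01 :=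
  .of_bound (measurable_stepF x a).aestronglyMeasurable (∑ l, |a l|)
    (Eventually.of_forall (abs_stepF_le x a))

variable {ι : Type*} {l : Filter ι} {y : ι → Fin (m + 1) → ℝ} {x : Fin (m + 1) → ℝ}

theorem tendsto_stepF_apply (a : Fin m → ℝ) (hy : Tendsto y l (nhds x)) {t : ℝ}
    (ht : t ∉ range x) : Tendsto (fun k => stepF (y k) a t) l (nhds (stepF x a t)) := by
  refine tendsto_finsetSum _ fun j _ => tendsto_const_nhds.congr' ?_
  filter_upwards [eventually_mem_Ioo_iff_of_tendsto (hy.apply_nhds j.castSucc)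
    (hy.apply_nhds j.succ) (ht ⟨_, ·⟩) (ht ⟨_, ·⟩)] with k hk
  simp only [indicator, hk]

theorem tendsto_L1dist_stepF [l.IsCountablyGenerated] (a : Fin m → ℝ)
    (hy : Tendsto y l (nhds x)) {g : ℝ → ℝ} (hg : Integrable g mu01) :
    Tendsto (fun k => L1dist (stepF (y k) a) g) l (nhds (L1dist (stepF x a) g)) := by
  refine tendsto_integral_filter_of_dominated_convergence (fun t => (∑ j, |a j|) + |g t|)
    (Eventually.of_forall fun k => ((integrable_stepF (y k) a).sub hg).abs.aestronglyMeasurable)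
    (Eventually.of_forall fun k => Eventually.of_forall fun t => ?_)
    ((integrable_const _).add hg.abs) ?_
  · calc ‖|stepF (y k) a t - g t|‖ = |stepF (y k) a t - g t| := abs_abs _
      _ ≤ |stepF (y k) a t| + |g t| := abs_sub _ _
      _ ≤ (∑ j, |a j|) + |g t| := by gcongr; exact abs_stepF_le (y k) a t
  · have notMem_range : ∀ᵐ t ∂mu01, t ∉ range x :=
      ae_restrict_of_ae ((finite_range x).countable.ae_notMem volume)
    filter_upwards [notMem_range] with t ht
    exact ((tendsto_stepF_apply a hy ht).sub_const _).abs

end StepFunction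

theorem L1dist_self (u : ℝ → ℝ) : L1dist u u = 0 := by
  simp only [L1dist, sub_self, abs_zero, integral_zero]

theorem L1dist_congr_left {u v : ℝ → ℝ} (h : u =ᵐ[mu01] v) (g : ℝ → ℝ) :
    L1dist u g = L1dist v g :=
  integral_congr_ae <| h.mono fun t ht => by simp only [ht]

theorem IsPC.exists_isPCRep_jumps {u : ℝ → ℝ} (h : IsPC u) :
    ∃ (x : Fin (jumps u + 2) → ℝ) (a : Fin (jumps u + 1) → ℝ), IsPCRep u x a := by
  obtain ⟨m, x, a, hx⟩ := h
  cases m with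
  | zero => exact absurd (hx.2.1.symm.trans hx.2.2.1) zero_ne_one
  | succ n =>
    exact Nat.sInf_mem
      (s := {j : ℕ | ∃ (x : Fin (j + 2) → ℝ) (a : Fin (j + 1) → ℝ), IsPCRep u x a}) ⟨n, x, a, hx⟩

theorem IsPCRep.jumps_le {u : ℝ → ℝ} {n : ℕ} {x : Fin (n + 2) → ℝ} {a : Fin (n + 1) → ℝ}
    (h : IsPCRep u x a) : jumps u ≤ n :=
  Nat.sInf_le ⟨x, a, h⟩

theorem IsPCRep.pottsIn_le {u : ℝ → ℝ} {n : ℕ} {x : Fin (n + 2) → ℝ} {a : Fin (n + 1) → ℝ}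
    (h : IsPCRep u x a) {S : Set ℝ} (hS : ∀ i, i ≠ 0 → i ≠ Fin.last (n + 1) → x i ∈ S)
    {γ : ℝ} (hγ : 0 ≤ γ) (f : ℝ → ℝ) :
    PottsIn γ f S u ≤ ENNReal.ofReal (γ * n + L1dist u f) := by
  rw [PottsIn, if_pos ⟨_, x, a, h, hS⟩]
  gcongr
  exact h.jumps_le

/-- `x` lists the nodes of a partition `0 = x 0 < x 1 < ⋯ < x m = 1` of the unit interval; this is
the part of `IsPCRep` that does not involve the represented function. -/
structure IsUnitPartition {m : ℕ} (x : Fin (m + 1) → ℝ) : Prop where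
  strictMono : StrictMono x
  apply_zero : x 0 = 0
  apply_last : x (Fin.last m) = 1

namespace IsUnitPartition

variable {m : ℕ} {x : Fin (m + 1) → ℝ}

theorem isPCRep_stepF (hx : IsUnitPartition x) (a : Fin m → ℝ) : IsPCRep (stepF x a) x a :=
  ⟨hx.strictMono, hx.apply_zero, hx.apply_last, Eventually.of_forall fun _ => rfl⟩

theorem apply_mem_Ioo (hx : IsUnitPartition x) {i : Fin (m + 1)} (h0 : i ≠ 0)
    (h1 : i ≠ Fin.last m) : x i ∈ Ioo (0 : ℝ) 1 :=
  ⟨hx.apply_zero ▸ hx.strictMono (Fin.pos_of_ne_zero h0),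
    hx.apply_last ▸ hx.strictMono (Fin.lt_last_iff_ne_last.2 h1)⟩

theorem exists_tendsto_eventually_mem (hx : IsUnitPartition x) {X : ℕ → Set ℝ}
    (hX : ∀ p ∈ Ioo (0 : ℝ) 1, Tendsto (fun k => Metric.infEDist p (X k)) atTop (nhds 0)) :
    ∃ y : ℕ → Fin (m + 1) → ℝ, Tendsto y atTop (nhds x) ∧ ∀ᶠ k in atTop,
      IsUnitPartition (y k) ∧ ∀ i, i ≠ 0 → i ≠ Fin.last m → y k i ∈ X k := by
  have node (i : Fin (m + 1)) : ∃ z : ℕ → ℝ, Tendsto z atTop (nhds (x i)) ∧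
      ∀ᶠ k in atTop, if i = 0 ∨ i = Fin.last m then z k = x i else z k ∈ X k := by
    split_ifs with hi
    · exact ⟨fun _ => x i, tendsto_const_nhds, Eventually.of_forall fun _ => rfl⟩
    · rw [not_or] at hi
      exact exists_tendsto_eventually_mem_of_tendsto_infEDist (hX _ (hx.apply_mem_Ioo hi.1 hi.2))
  choose z hzx hz using node
  have hy : Tendsto (fun k i => z i k) atTop (nhds x) := tendsto_pi_nhds.2 hzx
  refine ⟨fun k i => z i k, hy, ?_⟩
  filter_upwards [eventually_strictMono_of_tendsto hy hx.strictMono, eventually_all.2 hz]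
    with k hmono hk
  refine ⟨⟨hmono, ?_, ?_⟩, fun i h0 h1 => ?_⟩
  · simpa only [true_or, if_true, hx.apply_zero] using hk 0
  · simpa only [or_true, if_true, hx.apply_last] using hk (Fin.last m)
  · simpa only [h0, h1, or_self, if_false] using hk i

end IsUnitPartition

theorem statement_1_general
    (f : ℝ → ℝ) (hf : IntegrableOn f (Set.Icc 0 1)) (γ : ℝ) (hγ : 0 ≤ γ) (X : ℕ → Set ℝ)
    (hX : ∀ p ∈ Ioo (0 : ℝ) 1, Tendsto (fun k => Metric.infEDist p (X k)) atTop (nhds 0))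
    (u : ℝ → ℝ) (hu : IntegrableOn u (Set.Icc 0 1)) :
    ∃ useq : ℕ → ℝ → ℝ, (∀ k, IntegrableOn (useq k) (Set.Icc 0 1)) ∧
      Tendsto (fun k => L1dist (useq k) u) atTop (nhds 0) ∧
      limsup (fun k => PottsIn γ f (X k) (useq k)) atTop ≤ Potts γ f u := by
  by_cases hpc : IsPC u
  swap
  · exact ⟨fun _ => u, fun _ => hu, by simp only [L1dist_self, tendsto_const_nhds],
      by simp only [Potts, if_neg hpc, le_top]⟩
  obtain ⟨x, a, hmono, hx0, hx1, hux⟩ := hpc.exists_isPCRep_jumps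
  obtain ⟨y, hyx, hy⟩ := IsUnitPartition.exists_tendsto_eventually_mem ⟨hmono, hx0, hx1⟩ hX
  have dist_tendsto {g : ℝ → ℝ} (hg : Integrable g mu01) :
      Tendsto (fun k => L1dist (stepF (y k) a) g) atTop (nhds (L1dist u g)) :=
    L1dist_congr_left hux g ▸ tendsto_L1dist_stepF a hyx hg
  refine ⟨fun k => stepF (y k) a, fun k => integrable_stepF (y k) a,
    L1dist_self u ▸ dist_tendsto hu, ?_⟩
  calc limsup (fun k => PottsIn γ f (X k) (stepF (y k) a)) atTop
      ≤ limsup (fun k => ENNReal.ofReal (γ * jumps u + L1dist (stepF (y k) a) f)) atTop :=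
        limsup_le_limsup <| hy.mono fun k hk => (hk.1.isPCRep_stepF a).pottsIn_le hk.2 hγ f
    _ = ENNReal.ofReal (γ * jumps u + L1dist u f) :=
        (ENNReal.tendsto_ofReal ((dist_tendsto hf).const_add _)).limsup_eq
    _ = Potts γ f u := (if_pos hpc).symm

theorem statement_1
    (f : ℝ → ℝ) (hf : IntegrableOn f (Set.Icc 0 1))
    (γ : ℝ) (hγ : 0 < γ)
    (X : ℕ → Set ℝ) (hXfin : ∀ k, (X k).Finite) (hXsub : ∀ k, X k ⊆ Set.Icc 0 1)
    (hXnest : ∀ k, X k ⊆ X (k + 1)) (hXdense : Set.Icc (0:ℝ) 1 ⊆ closure (⋃ k, X k))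
    (u : ℝ → ℝ) (hu : IntegrableOn u (Set.Icc 0 1)) :
    ∃ useq : ℕ → ℝ → ℝ, (∀ k, IntegrableOn (useq k) (Set.Icc 0 1)) ∧
      Tendsto (fun k => L1dist (useq k) u) atTop (nhds 0) ∧
      limsup (fun k => PottsIn γ f (X k) (useq k)) atTop ≤ Potts γ f u := by
  exact statement_1_general f hf γ hγ.le X (fun p hp => tendsto_infEDist_of_mem_closure_iUnion
    (monotone_nat_of_le_succ hXnest) (hXdense (Ioo_subset_Icc_self hp))) u hu
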